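/- arXiv:2002.03459 — 3 statements merged into one kernel-verified Lean document; each statement's English description precedes it below -/
import Mathlib

section
/- Let ε ∈ (0,1) and let P ⊆ ℝ^m be a finite set of m points. There exists an absolute constant C > 0 such that for every natural number d with d ≥ C·(log m)/ε², there exists a linear map A : ℝ^m → ℝ^d such that for all x, y ∈ P, (1−ε)·‖x−y‖ ≤ ‖A x − A y‖ ≤ (1+ε)·‖x−y‖, where ‖·‖ denotes the Euclidean (ℓ₂) norm. -/
/-!
The map is a scaled Gaussian matrix: its rows `g i` are independent standard Gaussian vectors in
`ℝ^m`, and `A x = (⟪g i, x⟫ / √d)ᵢ`. For a unit vector `u` the numbers `⟪g i, u⟫` are independent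
standard normals, so `Z = ∑ i, ⟪g i, u⟫ ^ 2` has the moment generating function
`(1 - 2 s) ^ (-d / 2) ≤ exp (d (s + 4 s ^ 2))` for `|s| ≤ 1 / 4` (`integral_exp_mul_sq_le`,
`integral_exp_sum_sq_le`). With `s = ± ε / 8`, each of `exp (s (Z - (1 ± ε) d))` has expectation at
most `exp (- ε ^ 2 d / 16)`.

The union bound takes the form of a first-moment argument (`exists_gaussian_rows`): when the sum of
these exponentials over all normalized differences of points has expectation less than `1`, some
choice of rows makes every exponential less than `1`, that is, `(1 - ε) d < Z < (1 + ε) d` for all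
differences at once. There are at most `m ^ 2` differences, so `d ≥ 64 log m / ε ^ 2` suffices.
-/

open MeasureTheory ProbabilityTheory
open scoped RealInnerProductSpace

lemma neg_add_two_mul_sq_le_log_one_sub {x : ℝ} (hx : |x| ≤ 1 / 2) :
    -(x + 2 * x ^ 2) ≤ Real.log (1 - x) := by
  have h := Real.abs_log_sub_add_sum_range_le (x := x) (by linarith) 1
  simp only [Finset.sum_range_one, zero_add, pow_one, Nat.cast_zero, div_one, Nat.reduceAdd,
    sq_abs] at h
  have h2 : x ^ 2 / (1 - |x|) ≤ 2 * x ^ 2 := by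
    rw [div_le_iff₀ (by linarith)]
    nlinarith [sq_nonneg x]
  linarith [(abs_le.1 h).1]

lemma inv_sqrt_one_sub_le {s : ℝ} (hs : |s| ≤ 1 / 4) :
    (√(1 - 2 * s))⁻¹ ≤ Real.exp (s + 4 * s ^ 2) := by
  obtain ⟨h1, h2⟩ := abs_le.1 hs
  have hpos : 0 < 1 - 2 * s := by linarith
  have hlog := neg_add_two_mul_sq_le_log_one_sub (x := 2 * s)
    (by rw [abs_le]; constructor <;> linarith)
  rw [← Real.log_le_iff_le_exp (by positivity), Real.log_inv, Real.log_sqrt hpos.le]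
  linarith

lemma gaussianPDFReal_mul_exp (s x : ℝ) :
    gaussianPDFReal 0 1 x * Real.exp (s * x ^ 2) =
      (√(2 * Real.pi))⁻¹ * Real.exp (-((1 - 2 * s) / 2) * x ^ 2) := by
  simp only [gaussianPDFReal, NNReal.coe_one, mul_one, sub_zero]
  rw [mul_assoc, ← Real.exp_add]
  congr 2
  ring

lemma integrable_exp_mul_sq {s : ℝ} (hs : s < 1 / 2) :
    Integrable (fun x : ℝ ↦ Real.exp (s * x ^ 2)) (gaussianReal 0 1) := by
  rw [gaussianReal_of_var_ne_zero _ one_ne_zero,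
    integrable_withDensity_iff_integrable_smul' (by fun_prop) (by simp [gaussianPDF])]
  simp only [toReal_gaussianPDF, smul_eq_mul, gaussianPDFReal_mul_exp]
  exact (integrable_exp_neg_mul_sq (by linarith)).const_mul _

lemma integral_exp_mul_sq_le {s : ℝ} (hs : |s| ≤ 1 / 4) :
    ∫ x, Real.exp (s * x ^ 2) ∂(gaussianReal 0 1) ≤ Real.exp (s + 4 * s ^ 2) := by
  obtain ⟨h1, h2⟩ := abs_le.1 hs
  have hpos : 0 < 1 - 2 * s := by linarith
  rw [integral_gaussianReal_eq_integral_smul one_ne_zero]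
  simp only [smul_eq_mul, gaussianPDFReal_mul_exp]
  rw [integral_const_mul, integral_gaussian]
  refine le_of_eq_of_le ?_ (inv_sqrt_one_sub_le hs)
  rw [← Real.sqrt_inv, ← Real.sqrt_mul (by positivity), ← Real.sqrt_inv]
  congr 1
  field_simp

lemma exp_mul_sum_sq_sub {E : Type*} [NormedAddCommGroup E] [InnerProductSpace ℝ E] {d : ℕ}
    (s c : ℝ) (u : E) (g : Fin d → E) :
    Real.exp (s * (∑ i, ⟪u, g i⟫ ^ 2 - c * d)) =
      Real.exp (-(s * c * d)) * ∏ i, Real.exp (s * ⟪u, g i⟫ ^ 2) := by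
  rw [← Real.exp_sum, ← Real.exp_add, ← Finset.mul_sum]
  congr 1
  ring

section Rows

variable {E : Type*} [NormedAddCommGroup E] [InnerProductSpace ℝ E] [FiniteDimensional ℝ E]
  [MeasurableSpace E] [BorelSpace E]

lemma map_inner_stdGaussian {u : E} (hu : ‖u‖ = 1) :
    (stdGaussian E).map (fun g ↦ ⟪u, g⟫) = gaussianReal 0 1 := by
  have h := IsGaussian.map_eq_gaussianReal (μ := stdGaussian E) (innerSL ℝ u)
  rw [variance_dual_stdGaussian, integral_strongDual_stdGaussian, innerSL_apply_norm, hu] at h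
  simpa using h

lemma integrable_exp_sum_sq (d : ℕ) {s : ℝ} (hs : |s| ≤ 1 / 4) (c : ℝ) {u : E} (hu : ‖u‖ = 1) :
    Integrable (fun g : Fin d → E ↦ Real.exp (s * (∑ i, ⟪u, g i⟫ ^ 2 - c * d)))
      (Measure.pi fun _ ↦ stdGaussian E) := by
  simp only [exp_mul_sum_sq_sub]
  refine Integrable.const_mul ?_ _
  refine Integrable.fintype_prod (f := fun _ g ↦ Real.exp (s * ⟪u, g⟫ ^ 2)) fun _ ↦ ?_
  have h := integrable_exp_mul_sq (s := s) (by linarith [le_abs_self s])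
  rw [← map_inner_stdGaussian hu] at h
  exact h.comp_measurable (by fun_prop)

/-- Chernoff-type bound for a chi-squared variable with `d` degrees of freedom: the rows are
independent, so the expectation is the `d`-th power of a one-dimensional Gaussian integral. -/
lemma integral_exp_sum_sq_le (d : ℕ) {s : ℝ} (hs : |s| ≤ 1 / 4) (c : ℝ) {u : E} (hu : ‖u‖ = 1) :
    ∫ g : Fin d → E, Real.exp (s * (∑ i, ⟪u, g i⟫ ^ 2 - c * d))
      ∂(Measure.pi fun _ ↦ stdGaussian E) ≤ Real.exp (d * (s + 4 * s ^ 2 - s * c)) := by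
  simp only [exp_mul_sum_sq_sub]
  rw [integral_const_mul,
    integral_fintype_prod_eq_prod (f := fun _ g ↦ Real.exp (s * ⟪u, g⟫ ^ 2)),
    Finset.prod_const, Finset.card_univ, Fintype.card_fin]
  have h : ∫ g, Real.exp (s * ⟪u, g⟫ ^ 2) ∂(stdGaussian E) ≤ Real.exp (s + 4 * s ^ 2) := by
    refine le_of_eq_of_le ?_ (integral_exp_mul_sq_le hs)
    rw [← map_inner_stdGaussian hu, integral_map (by fun_prop)
      (Measurable.aestronglyMeasurable (by fun_prop))]
  calc _ ≤ Real.exp (-(s * c * d)) * Real.exp (s + 4 * s ^ 2) ^ d := by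
        gcongr
    _ = _ := by
        rw [← Real.exp_nat_mul, ← Real.exp_add]
        congr 1
        ring

/-- First-moment argument: if `2 |S| exp (- ε ^ 2 d / 16) < 1`, some choice of `d` rows nearly
preserves the norm of every unit vector in `S` (up to the factor `√d`). -/
lemma exists_gaussian_rows (S : Finset E) (hS : ∀ u ∈ S, ‖u‖ = 1) {ε : ℝ} (hε : 0 < ε)
    (hε1 : ε < 1) (d : ℕ) (hd : 2 * S.card * Real.exp (-(ε ^ 2 * d / 16)) < 1) :
    ∃ g : Fin d → E, ∀ u ∈ S,
      (1 - ε) * d < ∑ i, ⟪u, g i⟫ ^ 2 ∧ ∑ i, ⟪u, g i⟫ ^ 2 < (1 + ε) * d := by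
  have ht : |ε / 8| ≤ 1 / 4 := by rw [abs_of_pos (by positivity)]; linarith
  have ht' : |-(ε / 8)| ≤ 1 / 4 := by rwa [abs_neg]
  -- `upper u g ≥ 1` when the upper bound fails for `u`; likewise `lower u g ≥ 1` for the lower one.
  let upper (u : E) (g : Fin d → E) : ℝ :=
    Real.exp (ε / 8 * (∑ i, ⟪u, g i⟫ ^ 2 - (1 + ε) * d))
  let lower (u : E) (g : Fin d → E) : ℝ :=
    Real.exp (-(ε / 8) * (∑ i, ⟪u, g i⟫ ^ 2 - (1 - ε) * d))
  have hiU : ∀ u ∈ S, Integrable (upper u) (Measure.pi fun _ ↦ stdGaussian E) :=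
    fun u hu ↦ integrable_exp_sum_sq d ht _ (hS u hu)
  have hiL : ∀ u ∈ S, Integrable (lower u) (Measure.pi fun _ ↦ stdGaussian E) :=
    fun u hu ↦ integrable_exp_sum_sq d ht' _ (hS u hu)
  have hi : ∀ u ∈ S, Integrable (fun g ↦ upper u g + lower u g)
      (Measure.pi fun _ ↦ stdGaussian E) := fun u hu ↦ (hiU u hu).add (hiL u hu)
  obtain ⟨g, hg⟩ := exists_le_integral (integrable_finsetSum S hi)
  have hint : ∫ g, ∑ u ∈ S, (upper u g + lower u g) ∂(Measure.pi fun _ ↦ stdGaussian E) < 1 := by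
    refine lt_of_le_of_lt ?_ hd
    rw [integral_finsetSum S hi]
    calc _ ≤ ∑ u ∈ S, 2 * Real.exp (-(ε ^ 2 * d / 16)) := by
          refine Finset.sum_le_sum fun u hu ↦ ?_
          rw [integral_add (hiU u hu) (hiL u hu), two_mul]
          refine add_le_add ((integral_exp_sum_sq_le d ht _ (hS u hu)).trans_eq ?_)
            ((integral_exp_sum_sq_le d ht' _ (hS u hu)).trans_eq ?_) <;>
          · congr 1
            ring
      _ = _ := by
          rw [Finset.sum_const, nsmul_eq_mul]
          ring
  refine ⟨g, fun u hu ↦ ?_⟩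
  have hU : 0 < upper u g := Real.exp_pos _
  have hL : 0 < lower u g := Real.exp_pos _
  have hle : upper u g + lower u g ≤ ∑ u ∈ S, (upper u g + lower u g) :=
    Finset.single_le_sum (f := fun u ↦ upper u g + lower u g)
      (fun v _ ↦ (add_pos (Real.exp_pos _) (Real.exp_pos _)).le) hu
  have hU1 : upper u g < 1 := by linarith
  have hL1 : lower u g < 1 := by linarith
  rw [Real.exp_lt_one_iff] at hU1 hL1
  constructor <;> nlinarith

end Rows

/-- The linear map with rows `g i / √d`. -/
noncomputable def scaledRowMap {m d : ℕ} (g : Fin d → EuclideanSpace ℝ (Fin m)) :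
    EuclideanSpace ℝ (Fin m) →ₗ[ℝ] EuclideanSpace ℝ (Fin d) where
  toFun x := (√d)⁻¹ • WithLp.toLp 2 fun i ↦ ⟪x, g i⟫
  map_add' x y := by
    ext i
    simp [inner_add_left, mul_add]
  map_smul' c x := by
    ext i
    simp [inner_smul_left]
    ring

lemma norm_scaledRowMap_sq {m d : ℕ} (g : Fin d → EuclideanSpace ℝ (Fin m))
    (x : EuclideanSpace ℝ (Fin m)) :
    ‖scaledRowMap g x‖ ^ 2 = (∑ i, ⟪x, g i⟫ ^ 2) / d := by
  simp only [scaledRowMap, LinearMap.coe_mk, AddHom.coe_mk, norm_smul, mul_pow, norm_inv,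
    Real.norm_eq_abs, sq_abs, inv_pow, Real.sq_sqrt (Nat.cast_nonneg d),
    EuclideanSpace.real_norm_sq_eq]
  ring

/-- **Johnson–Lindenstrauss lemma.** There is an absolute constant `C > 0` such that for every
`ε ∈ (0,1)`, every finite set `P ⊆ ℝ^m` of `m` points, and every natural number `d` with
`d ≥ C·(log m)/ε²`, there is a linear map `A : ℝ^m → ℝ^d` such that for all `x, y ∈ P`,
`(1−ε)·‖x−y‖ ≤ ‖Ax − Ay‖ ≤ (1+ε)·‖x−y‖` (Euclidean norms). -/
theorem johnson_lindenstrauss :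
    ∃ C : ℝ, 0 < C ∧
      ∀ (m : ℕ), 1 ≤ m →
        ∀ (ε : ℝ), 0 < ε → ε < 1 →
          ∀ (P : Finset (EuclideanSpace ℝ (Fin m))), P.card = m →
            ∀ (d : ℕ), (d : ℝ) ≥ C * Real.log m / ε ^ 2 →
              ∃ A : EuclideanSpace ℝ (Fin m) →ₗ[ℝ] EuclideanSpace ℝ (Fin d),
                ∀ x ∈ P, ∀ y ∈ P,
                  (1 - ε) * ‖x - y‖ ≤ ‖A x - A y‖ ∧ ‖A x - A y‖ ≤ (1 + ε) * ‖x - y‖ := by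
  classical
  refine ⟨64, by norm_num, fun m hm ε hε hε1 P hP d hd ↦ ?_⟩
  let unit (p : EuclideanSpace ℝ (Fin m) × EuclideanSpace ℝ (Fin m)) :
      EuclideanSpace ℝ (Fin m) := ‖p.1 - p.2‖⁻¹ • (p.1 - p.2)
  let S := P.offDiag.image unit
  have hS : ∀ u ∈ S, ‖u‖ = 1 := by
    intro u hu
    obtain ⟨p, hp, rfl⟩ := Finset.mem_image.1 hu
    have hne : p.1 - p.2 ≠ 0 := sub_ne_zero.2 (Finset.mem_offDiag.1 hp).2.2
    simp only [unit, norm_smul, norm_inv, norm_norm]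
    exact inv_mul_cancel₀ (norm_ne_zero_iff.2 hne)
  have hm0 : (0 : ℝ) < m := by exact_mod_cast hm
  have hcard : 2 * S.card * Real.exp (-(ε ^ 2 * d / 16)) < 1 := by
    rcases hm.eq_or_lt with rfl | hm2
    · -- A single point has no differences, whatever `d` is.
      have h0 : S.card = 0 := by
        have := Finset.card_image_le (s := P.offDiag) (f := unit)
        rw [Finset.offDiag_card, hP] at this
        exact Nat.le_zero.1 this
      simp [h0]
    · have hSm : (S.card : ℝ) ≤ (m : ℝ) ^ 2 := by
        have h : S.card ≤ m ^ 2 := by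
          refine Finset.card_image_le.trans ?_
          rw [Finset.offDiag_card, hP, sq]
          exact Nat.sub_le _ _
        exact_mod_cast h
      have hexp : Real.exp (-(ε ^ 2 * d / 16)) ≤ ((m : ℝ) ^ 4)⁻¹ := by
        rw [← Real.le_log_iff_exp_le (by positivity), Real.log_inv, Real.log_pow]
        rw [ge_iff_le, div_le_iff₀ (by positivity)] at hd
        push_cast
        linarith
      have hm2' : (2 : ℝ) ≤ m := by exact_mod_cast hm2
      calc 2 * S.card * Real.exp (-(ε ^ 2 * d / 16))
          ≤ 2 * (m : ℝ) ^ 2 * ((m : ℝ) ^ 4)⁻¹ := by gcongr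
        _ = 2 / (m : ℝ) ^ 2 := by field_simp
        _ < 1 := by
          rw [div_lt_one (by positivity)]
          nlinarith
  obtain ⟨g, hg⟩ := exists_gaussian_rows S hS hε hε1 d hcard
  refine ⟨scaledRowMap g, fun x hx y hy ↦ ?_⟩
  rcases eq_or_ne x y with rfl | hxy
  · simp
  have hmem : unit (x, y) ∈ S :=
    Finset.mem_image_of_mem _ (Finset.mem_offDiag.2 ⟨hx, hy, hxy⟩)
  obtain ⟨h1, h2⟩ := hg _ hmem
  -- The two strict inequalities force `d ≠ 0`.
  have hd0 : (0 : ℝ) < d := by nlinarith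
  have hr : 0 < ‖x - y‖ := norm_pos_iff.2 (sub_ne_zero.2 hxy)
  have hsq : ‖scaledRowMap g x - scaledRowMap g y‖ ^ 2 =
      ‖x - y‖ ^ 2 * ((∑ i, ⟪unit (x, y), g i⟫ ^ 2) / d) := by
    rw [← norm_scaledRowMap_sq, ← map_sub, ← mul_pow]
    simp only [unit, map_smul, norm_smul, norm_inv, norm_norm]
    rw [mul_inv_cancel_left₀ hr.ne']
  rw [← lt_div_iff₀ hd0] at h1
  rw [← div_lt_iff₀ hd0] at h2
  constructor
  · refine le_of_sq_le_sq ?_ (norm_nonneg _)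
    rw [hsq, mul_pow, mul_comm]
    gcongr
    nlinarith
  · refine le_of_sq_le_sq ?_ (by positivity)
    rw [hsq, mul_pow, mul_comm]
    gcongr
    nlinarith
end

section
/- There exist absolute constants C, C', c > 0 such that the following holds. Let n ≥ 2, ε ∈ (0,1), let d be a natural number with d ≥ C·(log n)/ε², and set s = ⌈C'·d·ε⌉. Then there exists a probability distribution F over linear maps φ : ℝ^d × ℝ^d → ℝ^d of the form φ(x,y) = A₀x + A₁y, where A₀ and A₁ are d × d matrices all of whose entries lie in {−1/√s, 0, 1/√s} and each column of A₀ and of A₁ has at most s non-zero entries, such that for every fixed pair of vectors (x, y) ∈ ℝ^d × ℝ^d, with probability at least 1 − n^{−c} over φ drawn from F, (1−ε)·(‖x‖² + ‖y‖²) ≤ ‖φ(x,y)‖² ≤ (1+ε)·(‖x‖² + ‖y‖²). -/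
/-!
The distribution is the sparse sign matrix `M : ℝ^{2d} → ℝ^d`: each of the `2d` columns gets an
independent uniform support of size exactly `s`, and independent signs `±1/√s` on it. Because the
supports have exactly `s` elements, `‖Mx‖² - ‖x‖² = (1/s) ∑_r Y_r`, where `Y_r` is the off-diagonal
Rademacher chaos `∑_{i≠j} σᵢσⱼxᵢxⱼ` over the columns `i, j` present in row `r`.

For fixed supports the rows are independent. Integrating out the signs of one row one at a time
(`sum_exp_chaos_le`) gives `E exp(c Y_r) ≤ exp(4c² D_r)` for `|c| ‖x‖² ≤ 1/8`, with
`D_r = ∑_{i≠j} xᵢ²xⱼ²` over that row. Summing over the rows, the exponent becomes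
`4c² ∑_{i≠j} xᵢ²xⱼ² |Sᵢ ∩ Sⱼ|` (`sum_exp_rows_le`). This is a convex combination over pairs of columns
up to the factor `‖x‖⁴`, so by Jensen's inequality its exponential average over the supports is
bounded by that of a single pair (`sum_exp_pattern_le`), for which `|Sᵢ ∩ Sⱼ|` is hypergeometric with
mean `s²/d` (`sum_exp_inter_le`).

Altogether `E exp(l (‖Mx‖² - ‖x‖²)) ≤ exp(8 l² / d)` for `‖x‖ = 1` and `|l| ≤ s/8`. As `s ≥ d ε`, the
choice `l = ± d ε / 16` is admissible, and Chernoff's bound yields failure probability at most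
`2 exp(-ε² d / 32)` (`card_bad_le`), which is at most `n⁻¹` once `d ≥ 64 (log n) / ε²`.
-/

/-- The squared Euclidean (ℓ₂) norm of a vector in `ℝ^k`. -/
def enormSq {k : ℕ} (v : Fin k → ℝ) : ℝ := ∑ i, (v i) ^ 2

/-! ### Rademacher chaos of a single row -/

/-- The sign `±1` encoded by a Boolean. -/
def boolSign (b : Bool) : ℝ := if b then 1 else -1

/-- Moment generating function of the off-diagonal chaos `Y = (∑ σᵢxᵢ)² - ∑ xᵢ² = ∑_{i≠j} σᵢσⱼxᵢxⱼ`
over all sign vectors: on average `exp (c Y) ≤ exp (b² D)` with `D = ∑_{i≠j} xᵢ²xⱼ²`. With `S'`, `Y'`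
and `Q'` formed from the other coordinates, averaging over the sign of one coordinate `a` gives
`exp (2c²a²S'²)`, and `S'² = Y' + Q'`, so the same problem recurs with `c + 2c²a²` in place of `c`.
The hypothesis on `b` survives this step and keeps `|c| ≤ b` throughout. -/
theorem sum_exp_chaos_le (n : ℕ) : ∀ (x : Fin n → ℝ) (b c : ℝ), 0 ≤ b →
    |c| * (1 + 2 * b * ∑ i, x i ^ 2) ≤ b →
    ∑ σ : Fin n → Bool,
        Real.exp (c * ((∑ i, boolSign (σ i) * x i) ^ 2 - ∑ i, x i ^ 2)) ≤
      2 ^ n * Real.exp (b ^ 2 * ((∑ i, x i ^ 2) ^ 2 - ∑ i, x i ^ 4)) := by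
  induction n with
  | zero => intro x b c _ _; simp
  | succ n ih =>
    intro x b c hb h
    set y : Fin n → ℝ := fun i => x i.succ with hy
    set a := x 0 with ha
    set Q := ∑ i, y i ^ 2 with hQ
    have hQ0 : 0 ≤ Q := Finset.sum_nonneg fun i _ => sq_nonneg _
    have hc0 := abs_nonneg c
    have hsum2 : ∑ i, x i ^ 2 = a ^ 2 + Q := by rw [Fin.sum_univ_succ]
    have hsum4 : ∑ i, x i ^ 4 = a ^ 4 + ∑ i, y i ^ 4 := by rw [Fin.sum_univ_succ]
    rw [hsum2] at h
    have hcb : |c| ≤ b := by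
      have : 0 ≤ |c| * (2 * b * (a ^ 2 + Q)) := by positivity
      linarith
    have hcQ : |c| * (1 + 2 * b * Q) ≤ b := by
      have : 0 ≤ |c| * (2 * b * a ^ 2) := by positivity
      linarith
    have hc2 : c ^ 2 ≤ b ^ 2 := by
      rw [← sq_abs c]; gcongr
    -- Averaging over the sign of `a` replaces `c` by `c' = c + 2 c² a²`.
    have hstep : |c + 2 * c ^ 2 * a ^ 2| * (1 + 2 * b * Q) ≤ b := by
      have h1 : |c + 2 * c ^ 2 * a ^ 2| ≤ |c| * (1 + 2 * |c| * a ^ 2) := by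
        refine (abs_add_le _ _).trans (le_of_eq ?_)
        rw [abs_of_nonneg (by positivity : 0 ≤ 2 * c ^ 2 * a ^ 2), ← sq_abs c]; ring
      have h2 : (1 + 2 * |c| * a ^ 2) * (1 + 2 * b * Q) ≤ 1 + 2 * b * (a ^ 2 + Q) := by
        nlinarith [mul_le_mul_of_nonneg_left hcQ (sq_nonneg a)]
      calc _ ≤ |c| * (1 + 2 * |c| * a ^ 2) * (1 + 2 * b * Q) := by gcongr
        _ = |c| * ((1 + 2 * |c| * a ^ 2) * (1 + 2 * b * Q)) := by ring
        _ ≤ |c| * (1 + 2 * b * (a ^ 2 + Q)) := by gcongr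
        _ ≤ b := h
    have hIH := ih y b _ hb hstep
    rw [← (Fin.consEquiv fun _ => Bool).sum_comp, Fintype.sum_prod_type_right]
    have key : ∀ τ : Fin n → Bool,
        ∑ e : Bool, Real.exp
          (c * ((∑ i, boolSign ((Fin.consEquiv fun _ => Bool) (e, τ) i) * x i) ^ 2
            - ∑ i, x i ^ 2)) ≤
        2 * Real.exp (2 * c ^ 2 * a ^ 2 * Q) *
          Real.exp ((c + 2 * c ^ 2 * a ^ 2) * ((∑ i, boolSign (τ i) * y i) ^ 2 - Q)) := by
      intro τ
      set S := ∑ i, boolSign (τ i) * y i with hS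
      have e1 : ∀ e : Bool, ∑ i, boolSign ((Fin.consEquiv fun _ => Bool) (e, τ) i) * x i
          = boolSign e * a + S := by
        intro e
        rw [Fin.sum_univ_succ]; simp [Fin.consEquiv, hS, hy, ha]
      simp only [e1, hsum2, Fintype.sum_bool]
      have e2 : c * ((boolSign true * a + S) ^ 2 - (a ^ 2 + Q))
          = c * (S ^ 2 - Q) + 2 * c * a * S := by simp [boolSign]; ring
      have e3 : c * ((boolSign false * a + S) ^ 2 - (a ^ 2 + Q))
          = c * (S ^ 2 - Q) + -(2 * c * a * S) := by simp [boolSign]; ring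
      rw [e2, e3, Real.exp_add, Real.exp_add, ← mul_add]
      have hcosh := Real.cosh_le_exp_half_sq (2 * c * a * S)
      rw [Real.cosh_eq] at hcosh
      calc _ ≤ Real.exp (c * (S ^ 2 - Q)) * (2 * Real.exp ((2 * c * a * S) ^ 2 / 2)) := by
            gcongr; linarith
        _ = _ := by
            rw [mul_left_comm, ← Real.exp_add, mul_assoc (2 : ℝ) (Real.exp _), ← Real.exp_add]
            congr 2; ring
    refine (Finset.sum_le_sum fun τ _ => key τ).trans ?_
    rw [← Finset.mul_sum, hsum2, hsum4]
    calc _ ≤ 2 * Real.exp (2 * c ^ 2 * a ^ 2 * Q) *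
          (2 ^ n * Real.exp (b ^ 2 * (Q ^ 2 - ∑ i, y i ^ 4))) := by gcongr
      _ = 2 ^ (n + 1) * Real.exp (2 * c ^ 2 * a ^ 2 * Q + b ^ 2 * (Q ^ 2 - ∑ i, y i ^ 4)) := by
          rw [Real.exp_add]; ring
      _ ≤ _ := by
          gcongr
          nlinarith [mul_le_mul_of_nonneg_right hc2 (mul_nonneg (sq_nonneg a) hQ0)]

/-! ### Intersections of random column supports -/

/-- A uniform `s`-subset of a `d`-set contains a fixed `a`-set with probability at most `(s/d)^a`. -/
theorem choose_sub_le (d s : ℕ) (hsd : s ≤ d) (a : ℕ) (ha : a ≤ s) :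
    ((d - a).choose (s - a) : ℝ) ≤ (s / d : ℝ) ^ a * (d.choose s : ℝ) := by
  induction a with
  | zero => simp
  | succ a ih =>
    have ih := ih (by omega)
    obtain ⟨m, rfl⟩ : ∃ m, d = m + (a + 1) := ⟨d - (a + 1), by omega⟩
    obtain ⟨k, rfl⟩ : ∃ k, s = k + (a + 1) := ⟨s - (a + 1), by omega⟩
    have h1 := Nat.add_one_mul_choose_eq m k
    simp only [Nat.add_sub_cancel]
    rw [show m + (a + 1) - a = m + 1 by omega, show k + (a + 1) - a = k + 1 by omega] at ih
    have h2 : ((m : ℝ) + 1) * m.choose k = (m + 1).choose (k + 1) * (k + 1) := by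
      exact_mod_cast h1
    have h3 : (m.choose k : ℝ) = (k + 1) / (m + 1) * (m + 1).choose (k + 1) := by
      field_simp; linarith
    have hkm : (k : ℝ) ≤ m := by exact_mod_cast (by omega : k ≤ m)
    have h4 : ((k : ℝ) + 1) / (m + 1) ≤ ((k + (a + 1) : ℕ) : ℝ) / ((m + (a + 1) : ℕ) : ℝ) := by
      push_cast
      rw [div_le_div_iff₀ (by positivity) (by positivity)]
      nlinarith [(Nat.cast_nonneg a : (0 : ℝ) ≤ a)]
    rw [h3, pow_succ', mul_assoc]
    gcongr

/-- Hypergeometric moment generating function: the intersection of a uniform `s`-subset with a fixed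
one behaves at worst like a binomial variable with `s` trials of success probability `s/d`. -/
theorem sum_exp_inter_le (d s : ℕ) (hsd : s ≤ d) (T : Finset (Fin d)) (hT : T.card = s)
    (t : ℝ) (ht : 0 ≤ t) :
    ∑ S ∈ Finset.powersetCard s (Finset.univ : Finset (Fin d)),
        Real.exp (t * ((S ∩ T).card : ℝ)) ≤
      d.choose s * Real.exp ((s : ℝ) ^ 2 / d * (Real.exp t - 1)) := by
  set y := Real.exp t - 1 with hy
  have hy0 : 0 ≤ y := by have := Real.add_one_le_exp t; linarith
  have h1 : ∀ S : Finset (Fin d), Real.exp (t * ((S ∩ T).card : ℝ)) =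
      ∑ A ∈ T.powerset, if A ⊆ S then y ^ A.card else 0 := by
    intro S
    have : ∑ A ∈ T.powerset, (if A ⊆ S then y ^ A.card else 0)
        = ∑ A ∈ (S ∩ T).powerset, y ^ A.card := by
      rw [← Finset.sum_filter]
      congr 1; ext A
      simp only [Finset.mem_filter, Finset.mem_powerset, Finset.subset_inter_iff, and_comm]
    rw [this]
    have h := Finset.prod_one_add (f := fun _ : Fin d => y) (S ∩ T)
    simp only [Finset.prod_const] at h
    rw [← h, hy, add_sub_cancel, ← Real.exp_nat_mul, mul_comm]
  simp only [h1]
  rw [Finset.sum_comm]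
  have h2 : ∀ A ∈ T.powerset, ∑ S ∈ Finset.powersetCard s (Finset.univ : Finset (Fin d)),
      (if A ⊆ S then y ^ A.card else 0) ≤ d.choose s * (s / d * y : ℝ) ^ A.card := by
    intro A hA
    have hAs : A.card ≤ s := hT ▸ Finset.card_le_card (Finset.mem_powerset.1 hA)
    rw [← Finset.sum_filter, Finset.sum_const,
      Finset.card_filter_powersetCard_subset _ _ _ (Finset.subset_univ _) hAs, nsmul_eq_mul,
      Finset.card_univ, Fintype.card_fin, mul_pow]
    calc _ ≤ (s / d : ℝ) ^ A.card * (d.choose s : ℝ) * y ^ A.card := by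
          gcongr; exact choose_sub_le d s hsd _ hAs
      _ = _ := by ring
  refine (Finset.sum_le_sum h2).trans ?_
  rw [← Finset.mul_sum]
  have h := Finset.prod_one_add (f := fun _ : Fin d => (s / d * y : ℝ)) T
  simp only [Finset.prod_const] at h
  rw [← h, hT]
  gcongr
  calc (1 + s / d * y : ℝ) ^ s ≤ Real.exp (s / d * y) ^ s := by
        gcongr; have := Real.add_one_le_exp (s / d * y : ℝ); linarith
    _ = _ := by rw [← Real.exp_nat_mul]; congr 1; ring

/-! ### Averaging over signs and supports -/

/-- For fixed column supports the rows are independent, and the variance proxies of their chaoses add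
up to a weighted sum of the pairwise intersections of the supports. -/
theorem sum_exp_rows_le {d N : ℕ} (S : Fin N → Finset (Fin d)) (x : Fin N → ℝ) (c : ℝ)
    (hc : |c| * ∑ j, x j ^ 2 ≤ 1 / 8) :
    ∑ σ : Fin d → Fin N → Bool,
        Real.exp (c * ∑ r, ((∑ j, boolSign (σ r j) * (if r ∈ S j then x j else 0)) ^ 2
          - ∑ j, (if r ∈ S j then x j else 0) ^ 2)) ≤
      (2 ^ N) ^ d * Real.exp (4 * c ^ 2 * ∑ i, ∑ j,
        if i = j then 0 else x i ^ 2 * x j ^ 2 * ((S i ∩ S j).card : ℝ)) := by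
  set v : Fin d → Fin N → ℝ := fun r j => if r ∈ S j then x j else 0 with hv
  have hD : ∑ r, ((∑ j, v r j ^ 2) ^ 2 - ∑ j, v r j ^ 4) =
      ∑ i, ∑ j, if i = j then 0 else x i ^ 2 * x j ^ 2 * ((S i ∩ S j).card : ℝ) := by
    have h1 : ∀ r, (∑ j, v r j ^ 2) ^ 2 - ∑ j, v r j ^ 4 =
        ∑ i, ∑ j, if i = j then 0 else v r i ^ 2 * v r j ^ 2 := by
      intro r
      rw [sq, Finset.sum_mul_sum, ← Finset.sum_sub_distrib]
      refine Finset.sum_congr rfl fun i _ => ?_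
      rw [← Finset.sum_erase_add _ _ (Finset.mem_univ i),
        ← Finset.sum_erase_add (a := i) Finset.univ (fun j => if i = j then 0 else _)
          (Finset.mem_univ i)]
      have : ∑ j ∈ Finset.univ.erase i, (if i = j then 0 else v r i ^ 2 * v r j ^ 2) =
          ∑ j ∈ Finset.univ.erase i, v r i ^ 2 * v r j ^ 2 := by
        refine Finset.sum_congr rfl fun j hj => ?_
        rw [if_neg (Finset.ne_of_mem_erase hj).symm]
      rw [this, if_pos rfl]
      ring
    simp only [h1]
    rw [Finset.sum_comm]
    refine Finset.sum_congr rfl fun i _ => ?_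
    rw [Finset.sum_comm]
    refine Finset.sum_congr rfl fun j _ => ?_
    split_ifs with hij
    · simp
    · have : ∀ r, v r i ^ 2 * v r j ^ 2 = if r ∈ S i ∩ S j then x i ^ 2 * x j ^ 2 else 0 := by
        intro r
        by_cases h1 : r ∈ S i <;> by_cases h2 : r ∈ S j <;> simp [hv, h1, h2]
      simp only [this]
      rw [← Finset.sum_filter, Finset.sum_const, Finset.filter_mem_eq_inter, Finset.univ_inter,
        nsmul_eq_mul, mul_comm]
  have hrow : ∀ r : Fin d, ∑ τ : Fin N → Bool,
      Real.exp (c * ((∑ j, boolSign (τ j) * v r j) ^ 2 - ∑ j, v r j ^ 2)) ≤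
      2 ^ N * Real.exp ((2 * |c|) ^ 2 * ((∑ j, v r j ^ 2) ^ 2 - ∑ j, v r j ^ 4)) := by
    intro r
    refine sum_exp_chaos_le N (v r) (2 * |c|) c (by positivity) ?_
    have hle : ∑ j, v r j ^ 2 ≤ ∑ j, x j ^ 2 := by
      refine Finset.sum_le_sum fun j _ => ?_
      by_cases h : r ∈ S j <;> simp [hv, h, sq_nonneg]
    have h2 : |c| * ∑ j, v r j ^ 2 ≤ 1 / 8 :=
      (mul_le_mul_of_nonneg_left hle (abs_nonneg c)).trans hc
    nlinarith [mul_le_mul_of_nonneg_left h2 (abs_nonneg c), abs_nonneg c]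
  calc _ = ∏ r : Fin d, ∑ τ : Fin N → Bool,
      Real.exp (c * ((∑ j, boolSign (τ j) * v r j) ^ 2 - ∑ j, v r j ^ 2)) := by
        rw [Finset.prod_univ_sum, Fintype.piFinset_univ]
        refine Finset.sum_congr rfl fun σ _ => ?_
        rw [← Real.exp_sum, Finset.mul_sum]
    _ ≤ ∏ r : Fin d, (2 ^ N * Real.exp ((2 * |c|) ^ 2 *
          ((∑ j, v r j ^ 2) ^ 2 - ∑ j, v r j ^ 4))) :=
        Finset.prod_le_prod (fun r _ => Finset.sum_nonneg fun _ _ => (Real.exp_pos _).le)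
          fun r _ => hrow r
    _ = _ := by
        rw [Finset.prod_mul_distrib, Finset.prod_const, Finset.card_univ, Fintype.card_fin,
          ← Real.exp_sum, ← Finset.mul_sum, hD, mul_pow, sq_abs]
        norm_num

/-- The `s`-element subsets of `Fin d`. -/
abbrev SubsetOfCard (d s : ℕ) : Type :=
  ↥(Finset.powersetCard s (Finset.univ : Finset (Fin d)))

theorem card_subsetOfCard (d s : ℕ) : Fintype.card (SubsetOfCard d s) = d.choose s := by
  rw [Fintype.card_coe, Finset.card_powersetCard, Finset.card_univ, Fintype.card_fin]

/-- Any two distinct column supports are independent, so fixing one of them reduces the average to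
the hypergeometric one. -/
theorem sum_exp_pair_le {d N s : ℕ} (hsd : s ≤ d) (i j : Fin N) (hij : i ≠ j)
    (t : ℝ) (ht : 0 ≤ t) :
    ∑ S : Fin N → SubsetOfCard d s, Real.exp (t * (((S i).1 ∩ (S j).1).card : ℝ)) ≤
      Fintype.card (Fin N → SubsetOfCard d s) *
        Real.exp ((s : ℝ) ^ 2 / d * (Real.exp t - 1)) := by
  rw [Fintype.card_congr (Equiv.funSplitAt i (SubsetOfCard d s)), Fintype.card_prod,
    ← (Equiv.funSplitAt i (SubsetOfCard d s)).symm.sum_comp, Fintype.sum_prod_type_right,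
    card_subsetOfCard]
  push_cast
  rw [mul_comm (_ : ℝ) (Fintype.card _ : ℝ), mul_assoc, ← nsmul_eq_mul, ← Finset.card_univ,
    ← Finset.sum_const]
  refine Finset.sum_le_sum fun R _ => ?_
  simp only [Equiv.funSplitAt, Equiv.piSplitAt_symm_apply, dif_pos, dif_neg hij.symm]
  have h := sum_exp_inter_le d s hsd (R ⟨j, hij.symm⟩).1
    (Finset.mem_powersetCard.1 (R ⟨j, hij.symm⟩).2).2 t ht
  rw [← Finset.sum_coe_sort] at h
  exact h

/-- Jensen's inequality with the weights `xᵢ²xⱼ²/‖x‖⁴` bounds the average over all supports by the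
worst pair of columns, so no joint information beyond pairwise intersections is needed. -/
theorem sum_exp_pattern_le {d N s : ℕ} (hsd : s ≤ d) (x : Fin N → ℝ) (hx : 0 < ∑ j, x j ^ 2)
    (κ : ℝ) (hκ : 0 ≤ κ) :
    ∑ S : Fin N → SubsetOfCard d s, Real.exp (κ * ∑ i, ∑ j,
        if i = j then 0 else x i ^ 2 * x j ^ 2 * (((S i).1 ∩ (S j).1).card : ℝ)) ≤
      Fintype.card (Fin N → SubsetOfCard d s) *
        Real.exp ((s : ℝ) ^ 2 / d * (Real.exp (κ * (∑ j, x j ^ 2) ^ 2) - 1)) := by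
  set q := ∑ j, x j ^ 2 with hq
  set t := κ * q ^ 2 with ht
  have ht0 : 0 ≤ t := by positivity
  set w : Fin N × Fin N → ℝ := fun p => x p.1 ^ 2 * x p.2 ^ 2 / q ^ 2 with hw
  have hw0 : ∀ p, 0 ≤ w p := fun p => by simp only [hw]; positivity
  have hw1 : ∑ p, w p = 1 := by
    simp only [hw]
    rw [← Finset.sum_div, Fintype.sum_prod_type]
    simp only
    rw [← Finset.sum_mul_sum, ← hq]
    field_simp
  set Nn : (Fin N → SubsetOfCard d s) → Fin N × Fin N → ℝ := fun S p =>
    if p.1 = p.2 then 0 else (((S p.1).1 ∩ (S p.2).1).card : ℝ) with hN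
  have h1 : ∀ S : Fin N → SubsetOfCard d s, Real.exp (κ * ∑ i, ∑ j,
        if i = j then 0 else x i ^ 2 * x j ^ 2 * (((S i).1 ∩ (S j).1).card : ℝ)) ≤
        ∑ p, w p * Real.exp (t * Nn S p) := by
    intro S
    have := convexOn_exp.map_sum_le (t := Finset.univ) (w := w) (p := fun p => t * Nn S p)
      (fun p _ => hw0 p) hw1 (fun _ _ => Set.mem_univ _)
    simp only [smul_eq_mul] at this
    refine le_trans (le_of_eq ?_) this
    rw [Fintype.sum_prod_type, Finset.mul_sum]
    congr 1
    refine Finset.sum_congr rfl fun i _ => ?_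
    rw [Finset.mul_sum]
    refine Finset.sum_congr rfl fun j _ => ?_
    simp only [hw, hN, ht]
    split_ifs
    · simp
    · field_simp
  refine (Finset.sum_le_sum fun S _ => h1 S).trans ?_
  rw [Finset.sum_comm]
  set B := (Fintype.card (Fin N → SubsetOfCard d s) : ℝ) *
        Real.exp ((s : ℝ) ^ 2 / d * (Real.exp t - 1)) with hB
  have h2 : ∀ p : Fin N × Fin N, ∑ S, w p * Real.exp (t * Nn S p) ≤ w p * B := by
    rintro ⟨i, j⟩
    rw [← Finset.mul_sum]
    refine mul_le_mul_of_nonneg_left ?_ (hw0 _)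
    by_cases hij : i = j
    · have h3 : 0 ≤ (s : ℝ) ^ 2 / d * (Real.exp t - 1) := by
        have := Real.add_one_le_exp t
        exact mul_nonneg (by positivity) (by linarith)
      simp only [hN, hij, if_true, mul_zero, Real.exp_zero, Finset.sum_const, nsmul_eq_mul,
        mul_one, Finset.card_univ, hB]
      exact le_mul_of_one_le_right (by positivity) (Real.one_le_exp h3)
    · simp only [hN, if_neg hij]
      exact sum_exp_pair_le hsd i j hij t ht0
  refine (Finset.sum_le_sum fun p _ => h2 p).trans ?_
  rw [← Finset.sum_mul, hw1, one_mul]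

/-- `s` times the distortion `‖Mx‖² - ‖x‖²` of the sparse sign matrix `M` with signs `σ` and column
supports `S`: the sum over the rows of their off-diagonal chaoses. -/
def scaledDistortion {d N : ℕ} (σ : Fin d → Fin N → Bool) (S : Fin N → Finset (Fin d))
    (x : Fin N → ℝ) : ℝ :=
  ∑ r, ((∑ j, boolSign (σ r j) * (if r ∈ S j then x j else 0)) ^ 2
    - ∑ j, (if r ∈ S j then x j else 0) ^ 2)

/-- The sample space: independent signs and independent `s`-element column supports. -/
abbrev SparseSample (d N s : ℕ) : Type :=
  (Fin d → Fin N → Bool) × (Fin N → SubsetOfCard d s)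

theorem sum_exp_distortion_le {d N s : ℕ} (hsd : s ≤ d) (x : Fin N → ℝ)
    (hx : 0 < ∑ j, x j ^ 2) (c : ℝ) (hc : |c| * ∑ j, x j ^ 2 ≤ 1 / 8) :
    ∑ ω : SparseSample d N s, Real.exp (c * scaledDistortion ω.1 (fun j => (ω.2 j).1) x) ≤
      Fintype.card (SparseSample d N s) *
        Real.exp ((s : ℝ) ^ 2 / d * (Real.exp (4 * c ^ 2 * (∑ j, x j ^ 2) ^ 2) - 1)) := by
  rw [Fintype.sum_prod_type_right, Fintype.card_prod]
  have h1 := fun S : Fin N → SubsetOfCard d s => sum_exp_rows_le (fun j => (S j).1) x c hc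
  refine (Finset.sum_le_sum fun S _ => h1 S).trans ?_
  rw [← Finset.mul_sum]
  have h2 := sum_exp_pattern_le hsd x hx (4 * c ^ 2) (by positivity)
  refine (mul_le_mul_of_nonneg_left h2 (by positivity)).trans (le_of_eq ?_)
  simp [mul_assoc]

/-- Chernoff's bound for the counting measure. -/
theorem card_filter_le_of_sum_exp_le {Ω : Type*} [Fintype Ω] (f : Ω → ℝ) (a B : ℝ)
    (h : ∑ ω, Real.exp (f ω) ≤ B) :
    ((Finset.univ.filter fun ω => a ≤ f ω).card : ℝ) ≤ B * Real.exp (-a) := by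
  rw [Real.exp_neg, ← div_eq_mul_inv, le_div_iff₀ (Real.exp_pos a)]
  refine le_trans ?_ h
  rw [← nsmul_eq_mul, ← Finset.sum_const]
  refine (Finset.sum_le_sum fun ω hω => ?_).trans
    (Finset.sum_le_sum_of_subset_of_nonneg (Finset.filter_subset _ _)
      fun _ _ _ => (Real.exp_pos _).le)
  exact Real.exp_le_exp.2 (Finset.mem_filter.1 hω).2

/-- All but a fraction `2 exp (-ε² d / 32)` of the sample space distorts `‖x‖²` by at most `ε ‖x‖²`. -/
theorem card_bad_le {d N s : ℕ} (hsd : s ≤ d) (hs : 0 < s) (ε : ℝ) (hε : 0 < ε)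
    (hsε : d * ε ≤ s) (x : Fin N → ℝ) :
    ((Finset.univ.filter fun ω : SparseSample d N s =>
        ε * s * ∑ j, x j ^ 2 < |scaledDistortion ω.1 (fun j => (ω.2 j).1) x|).card : ℝ) ≤
      Fintype.card (SparseSample d N s) * (2 * Real.exp (-(ε ^ 2 * d / 32))) := by
  have hd : (0 : ℝ) < d := by exact_mod_cast hs.trans_le hsd
  have hs' : (0 : ℝ) < s := by exact_mod_cast hs
  set q := ∑ j, x j ^ 2 with hq
  have hq0 : 0 ≤ q := Finset.sum_nonneg fun _ _ => sq_nonneg _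
  rcases hq0.eq_or_lt with h0 | hq0
  · have hx : ∀ j, x j = 0 := fun j => by
      have := (Finset.sum_eq_zero_iff_of_nonneg fun j _ => sq_nonneg (x j)).1 h0.symm j
        (Finset.mem_univ j)
      simpa using this
    rw [Finset.filter_false_of_mem]
    · simp only [Finset.card_empty, Nat.cast_zero]; positivity
    · intro ω _
      simp [scaledDistortion, hx, ← h0]
  -- `l = d ε / (16 s q)` minimises the exponent `8 (l s q)² / d - l s q ε`.
  set l := ε * d / (16 * s * q) with hl
  have hl0 : 0 < l := by positivity
  have hlq : l * q = ε * d / (16 * s) := by rw [hl]; field_simp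
  have hlq16 : l * q ≤ 1 / 16 := by
    rw [hlq, div_le_div_iff₀ (by positivity) (by norm_num)]; linarith
  have htail : ∀ c : ℝ, |c| = l →
      ((Finset.univ.filter fun ω : SparseSample d N s =>
        l * (ε * s * q) ≤ c * scaledDistortion ω.1 (fun j => (ω.2 j).1) x).card : ℝ) ≤
      Fintype.card (SparseSample d N s) * Real.exp (-(ε ^ 2 * d / 32)) := by
    intro c hc
    refine (card_filter_le_of_sum_exp_le _ _ _
      (sum_exp_distortion_le hsd x hq0 c (by rw [hc]; linarith))).trans ?_
    rw [mul_assoc, ← Real.exp_add]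
    gcongr
    rw [← hq]
    have hT : 4 * c ^ 2 * q ^ 2 = 4 * (l * q) ^ 2 := by rw [← sq_abs c, hc]; ring
    rw [hT]
    set u := l * q with hu
    have hu0 : 0 ≤ u := by positivity
    have hexp : Real.exp (4 * u ^ 2) - 1 ≤ 2 * (4 * u ^ 2) := by
      have hnn : 0 ≤ 4 * u ^ 2 := by positivity
      have := Real.abs_exp_sub_one_le (x := 4 * u ^ 2)
        (by rw [abs_of_nonneg hnn]; nlinarith)
      rw [abs_of_nonneg hnn] at this
      exact (le_abs_self _).trans this
    have h1 : (s : ℝ) ^ 2 / d * (Real.exp (4 * u ^ 2) - 1) ≤ (s : ℝ) ^ 2 / d * (2 * (4 * u ^ 2)) :=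
      mul_le_mul_of_nonneg_left hexp (by positivity)
    have h2 : (s : ℝ) ^ 2 / d * (2 * (4 * u ^ 2)) = ε ^ 2 * d / 32 := by
      rw [hlq]; field_simp; norm_num
    have h3 : l * (ε * s * q) = ε ^ 2 * d / 16 := by
      rw [hl]; field_simp
    rw [h3]
    linarith
  have hp := htail l (abs_of_pos hl0)
  have hn := htail (-l) (by rw [abs_neg, abs_of_pos hl0])
  have hsub : (Finset.univ.filter fun ω : SparseSample d N s =>
      ε * s * q < |scaledDistortion ω.1 (fun j => (ω.2 j).1) x|) ⊆
      (Finset.univ.filter fun ω : SparseSample d N s =>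
        l * (ε * s * q) ≤ l * scaledDistortion ω.1 (fun j => (ω.2 j).1) x) ∪
      (Finset.univ.filter fun ω : SparseSample d N s =>
        l * (ε * s * q) ≤ -l * scaledDistortion ω.1 (fun j => (ω.2 j).1) x) := by
    intro ω hω
    simp only [Finset.mem_filter, Finset.mem_univ, true_and, Finset.mem_union] at hω ⊢
    rcases lt_abs.1 hω with h | h
    · exact Or.inl (mul_le_mul_of_nonneg_left h.le hl0.le)
    · right
      rw [neg_mul, ← mul_neg]
      exact mul_le_mul_of_nonneg_left h.le hl0.le
  have hcard : ((Finset.univ.filter fun ω : SparseSample d N s =>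
      ε * s * q < |scaledDistortion ω.1 (fun j => (ω.2 j).1) x|).card : ℝ) ≤ _ :=
    Nat.cast_le.2 ((Finset.card_le_card hsub).trans (Finset.card_union_le _ _))
  push_cast at hcard
  linarith

/-! ### The random matrix -/

/-- The sparse sign matrix with signs `σ` and column supports `S`. -/
noncomputable def sparseMatrix {d N : ℕ} (s : ℕ) (σ : Fin d → Fin N → Bool)
    (S : Fin N → Finset (Fin d)) : Matrix (Fin d) (Fin N) ℝ :=
  fun r j => if r ∈ S j then boolSign (σ r j) * (1 / Real.sqrt s) else 0

/-- Since every column has exactly `s` entries `±1/√s`, the diagonal part of `‖Mx‖²` is exactly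
`‖x‖²`. -/
theorem enormSq_sparseMatrix {d N s : ℕ} (hs : 0 < s) (σ : Fin d → Fin N → Bool)
    (S : Fin N → Finset (Fin d)) (hS : ∀ j, (S j).card = s) (x : Fin N → ℝ) :
    enormSq ((sparseMatrix s σ S).mulVec x) =
      ∑ j, x j ^ 2 + scaledDistortion σ S x / s := by
  have hs' : (0 : ℝ) < s := by exact_mod_cast hs
  have h1 : ∀ r, (sparseMatrix s σ S).mulVec x r =
      (1 / Real.sqrt s) * ∑ j, boolSign (σ r j) * (if r ∈ S j then x j else 0) := by
    intro r
    simp only [Matrix.mulVec, dotProduct, sparseMatrix, Finset.mul_sum]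
    refine Finset.sum_congr rfl fun j _ => ?_
    split_ifs <;> ring
  have h2 : ∑ r : Fin d, ∑ j, (if r ∈ S j then x j else 0) ^ 2 = s * ∑ j, x j ^ 2 := by
    rw [Finset.sum_comm, Finset.mul_sum]
    refine Finset.sum_congr rfl fun j _ => ?_
    have : ∀ r, (if r ∈ S j then x j else 0) ^ 2 = if r ∈ S j then x j ^ 2 else 0 := by
      intro r; split_ifs <;> simp
    simp only [this]
    rw [← Finset.sum_filter, Finset.sum_const, Finset.filter_mem_eq_inter, Finset.univ_inter,
      nsmul_eq_mul, hS]
  simp only [enormSq, h1, mul_pow, scaledDistortion, Finset.sum_sub_distrib, h2]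
  rw [← Finset.mul_sum, div_pow, Real.sq_sqrt hs'.le]
  field_simp
  ring

/-- The pair of `d × d` blocks `(A₀, A₁)` of a `d × 2d` matrix. -/
def splitBlocks {d : ℕ} (M : Matrix (Fin d) (Fin (d + d)) ℝ) :
    Matrix (Fin d) (Fin d) ℝ × Matrix (Fin d) (Fin d) ℝ :=
  (fun r j => M r (Fin.castAdd d j), fun r j => M r (Fin.natAdd d j))

theorem splitBlocks_mulVec {d : ℕ} (M : Matrix (Fin d) (Fin (d + d)) ℝ) (x y : Fin d → ℝ) :
    (splitBlocks M).1.mulVec x + (splitBlocks M).2.mulVec y = M.mulVec (Fin.append x y) := by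
  funext r
  simp only [Pi.add_apply, Matrix.mulVec, dotProduct, splitBlocks, Fin.sum_univ_add,
    Fin.append_left, Fin.append_right]

theorem sparseMatrix_entry {d N s : ℕ} (σ : Fin d → Fin N → Bool)
    (S : Fin N → Finset (Fin d)) (r : Fin d) (j : Fin N) :
    sparseMatrix s σ S r j = -(1 / Real.sqrt s) ∨ sparseMatrix s σ S r j = 0 ∨
      sparseMatrix s σ S r j = 1 / Real.sqrt s := by
  unfold sparseMatrix boolSign
  split_ifs <;> simp

theorem card_sparseMatrix_col {d N s : ℕ} (σ : Fin d → Fin N → Bool)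
    (S : Fin N → Finset (Fin d)) (hS : ∀ j, (S j).card = s) (j : Fin N) :
    Nat.card {r : Fin d // sparseMatrix s σ S r j ≠ 0} ≤ s := by
  classical
  rw [Nat.card_eq_fintype_card, Fintype.card_subtype, ← hS j]
  refine Finset.card_le_card fun r hr => ?_
  by_contra h
  simp [sparseMatrix, h] at hr

/-- **The paper's dimensionality-reduction primitive (Corollary 4).** There are absolute
constants `C, C', c > 0` such that for every `n ≥ 2`, `ε ∈ (0,1)`, `d ≥ C·(log n)/ε²` and
`s = ⌈C'·d·ε⌉`, there is a probability distribution `F` over linear maps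
`φ(x,y) = A₀x + A₁y : ℝ^d × ℝ^d → ℝ^d` (represented by the pair of matrices `(A₀, A₁)`),
where all entries of `A₀, A₁` lie in `{−1/√s, 0, 1/√s}` and each column has at most `s`
non-zero entries, such that for every fixed `(x,y)`, with probability at least `1 − n^{−c}`
over `φ ∼ F`, `(1−ε)·(‖x‖² + ‖y‖²) ≤ ‖φ(x,y)‖² ≤ (1+ε)·(‖x‖² + ‖y‖²)`. -/
theorem dimred_primitive :
    ∃ C C' c : ℝ, 0 < C ∧ 0 < C' ∧ 0 < c ∧
      ∀ (n : ℕ), 2 ≤ n →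
        ∀ (ε : ℝ), 0 < ε → ε < 1 →
          ∀ (d : ℕ), (d : ℝ) ≥ C * Real.log n / ε ^ 2 →
            ∀ (s : ℕ), s = ⌈C' * d * ε⌉₊ →
              ∃ F : PMF (Matrix (Fin d) (Fin d) ℝ × Matrix (Fin d) (Fin d) ℝ),
                (∀ p ∈ F.support,
                    (∀ i j, p.1 i j = -(1 / Real.sqrt s) ∨ p.1 i j = 0 ∨
                        p.1 i j = 1 / Real.sqrt s) ∧
                    (∀ i j, p.2 i j = -(1 / Real.sqrt s) ∨ p.2 i j = 0 ∨
                        p.2 i j = 1 / Real.sqrt s) ∧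
                    (∀ j, Nat.card {i : Fin d // p.1 i j ≠ 0} ≤ s) ∧
                    (∀ j, Nat.card {i : Fin d // p.2 i j ≠ 0} ≤ s)) ∧
                ∀ x y : Fin d → ℝ,
                  ENNReal.ofReal (1 - (n : ℝ) ^ (-c)) ≤
                    ∑' q : {p : Matrix (Fin d) (Fin d) ℝ × Matrix (Fin d) (Fin d) ℝ //
                        (1 - ε) * (enormSq x + enormSq y) ≤
                            enormSq (p.1.mulVec x + p.2.mulVec y) ∧
                        enormSq (p.1.mulVec x + p.2.mulVec y) ≤
                            (1 + ε) * (enormSq x + enormSq y)},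
                      F q.1 := by
  refine ⟨64, 1, 1, by norm_num, one_pos, one_pos, ?_⟩
  intro n hn ε hε hε1 d hd s hs
  have hn' : (2 : ℝ) ≤ n := by exact_mod_cast hn
  have hlog : 0 < Real.log n := Real.log_pos (by linarith)
  have hd0 : (0 : ℝ) < d := lt_of_lt_of_le (by positivity) hd
  have hdε : 0 < (d : ℝ) * ε := by positivity
  rw [one_mul] at hs
  have hs0 : 0 < s := hs ▸ Nat.ceil_pos.2 hdε
  have hs0' : (0 : ℝ) < s := by exact_mod_cast hs0
  have hsε : (d : ℝ) * ε ≤ s := hs ▸ Nat.le_ceil _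
  have hsd : s ≤ d := hs ▸ Nat.ceil_le.2 (by nlinarith)
  have hne : Nonempty (SubsetOfCard d s) := by
    rw [← Fintype.card_pos_iff, card_subsetOfCard]; exact Nat.choose_pos hsd
  let G : SparseSample d (d + d) s → Matrix (Fin d) (Fin d) ℝ × Matrix (Fin d) (Fin d) ℝ :=
    fun ω => splitBlocks (sparseMatrix s ω.1 fun j => (ω.2 j).1)
  have hcard : ∀ (ω : SparseSample d (d + d) s) j, (ω.2 j).1.card = s := fun ω j =>
    (Finset.mem_powersetCard.1 (ω.2 j).2).2
  refine ⟨(PMF.uniformOfFintype (SparseSample d (d + d) s)).map G, ?_, ?_⟩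
  · intro p hp
    obtain ⟨ω, -, rfl⟩ := (PMF.mem_support_map_iff _ _ _).1 hp
    exact ⟨fun i j => sparseMatrix_entry ω.1 (fun j => (ω.2 j).1) i (Fin.castAdd d j),
      fun i j => sparseMatrix_entry ω.1 (fun j => (ω.2 j).1) i (Fin.natAdd d j),
      fun j => card_sparseMatrix_col _ _ (hcard ω) _,
      fun j => card_sparseMatrix_col _ _ (hcard ω) _⟩
  · intro x y
    classical
    set P : Set (Matrix (Fin d) (Fin d) ℝ × Matrix (Fin d) (Fin d) ℝ) :=
      {p | (1 - ε) * (enormSq x + enormSq y) ≤ enormSq (p.1.mulVec x + p.2.mulVec y) ∧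
        enormSq (p.1.mulVec x + p.2.mulVec y) ≤ (1 + ε) * (enormSq x + enormSq y)} with hP
    set F := (PMF.uniformOfFintype (SparseSample d (d + d) s)).map G with hF
    have hsum : (∑' q : P, F q.1) = F.toOuterMeasure P := by
      rw [PMF.toOuterMeasure_apply, tsum_subtype]
    refine le_of_le_of_eq ?_ hsum.symm
    rw [hF, PMF.toOuterMeasure_map_apply, PMF.toOuterMeasure_uniformOfFintype_apply]
    set z := Fin.append x y with hz
    have hq : ∑ j, z j ^ 2 = enormSq x + enormSq y := by
      simp only [hz, enormSq, Fin.sum_univ_add, Fin.append_left, Fin.append_right]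
    have hbad := card_bad_le hsd hs0 ε hε hsε z
    set bad := Finset.univ.filter fun ω : SparseSample d (d + d) s =>
        ε * s * ∑ j, z j ^ 2 < |scaledDistortion ω.1 (fun j => (ω.2 j).1) z| with hbaddef
    have hgood : badᶜ ⊆ (G ⁻¹' P).toFinset := by
      intro ω hω
      simp only [hbaddef, Finset.mem_compl, Finset.mem_filter, Finset.mem_univ, true_and,
        not_lt] at hω
      rw [Set.mem_toFinset, Set.mem_preimage, hP, Set.mem_ofPred_eq, splitBlocks_mulVec,
        enormSq_sparseMatrix hs0 _ _ (hcard ω), ← hq]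
      obtain ⟨h1, h2⟩ := abs_le.1 hω
      have h3 := (div_le_div_iff_of_pos_right hs0').2 h1
      have h4 := (div_le_div_iff_of_pos_right hs0').2 h2
      have h5 : ε * s * (∑ j, z j ^ 2) / s = ε * ∑ j, z j ^ 2 := by field_simp
      rw [neg_div, h5] at h3
      rw [h5] at h4
      constructor <;> linarith
    set K := Fintype.card (SparseSample d (d + d) s) with hK
    have hK0 : (0 : ℝ) < K := by exact_mod_cast Fintype.card_pos
    have hge : (K : ℝ) - bad.card ≤ Fintype.card (G ⁻¹' P) := by
      have h1 := Finset.card_le_card hgood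
      rw [Set.toFinset_card] at h1
      have h2 : bad.card + badᶜ.card = K := Finset.card_add_card_compl bad
      have h3 : K ≤ bad.card + Fintype.card (G ⁻¹' P) := by omega
      have : (K : ℝ) ≤ bad.card + Fintype.card (G ⁻¹' P) := by exact_mod_cast h3
      linarith
    -- `ε² d ≥ 64 log n`, so the failure probability is at most `2 n⁻² ≤ n⁻¹`.
    have hexp : 2 * Real.exp (-(ε ^ 2 * d / 32)) ≤ (n : ℝ) ^ (-1 : ℝ) := by
      have h1 : 64 * Real.log n ≤ ε ^ 2 * d := by
        have := (div_le_iff₀ (by positivity : (0 : ℝ) < ε ^ 2)).1 hd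
        linarith
      have h2 : Real.exp (-(ε ^ 2 * d / 32)) ≤ Real.exp (-Real.log n + -Real.log n) :=
        Real.exp_le_exp.2 (by linarith)
      rw [Real.exp_add, Real.exp_neg (Real.log n),
        Real.exp_log (by linarith : (0 : ℝ) < n)] at h2
      rw [Real.rpow_neg_one]
      have h3 : (n : ℝ)⁻¹ ≤ 1 / 2 := by rw [inv_eq_one_div]; gcongr
      have h4 : 0 < (n : ℝ)⁻¹ := by positivity
      nlinarith
    have hfrac : 1 - (n : ℝ) ^ (-1 : ℝ) ≤ (Fintype.card (G ⁻¹' P) : ℝ) / K := by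
      rw [le_div_iff₀ hK0]
      nlinarith [mul_le_mul_of_nonneg_left hexp hK0.le]
    refine (ENNReal.ofReal_le_ofReal hfrac).trans (le_of_eq ?_)
    rw [ENNReal.ofReal_div_of_pos hK0, ENNReal.ofReal_natCast, ENNReal.ofReal_natCast]
end

section
/- Let d ≥ 1, k ≥ 0, m = d·2^k, and let n be divisible by d with n ≥ m. Let x ∈ ℝ^n, let φ₁, …, φ_k : ℝ^d × ℝ^d → ℝ^d be linear maps, and define blocks v⁽⁰⁾ⱼ = (x_{d(j−1)+1}, …, x_{dj}) and the AllSketch recursion v⁽ⁱ⁾ⱼ = φᵢ(v⁽ⁱ⁻¹⁾ⱼ, v⁽ⁱ⁻¹⁾_{j+2^{i−1}}). For a vector z ∈ ℝ^m with blocks w⁽⁰⁾ⱼ = (z_{d(j−1)+1}, …, z_{dj}), define the SingleSketch recursion w⁽ⁱ⁾ⱼ = φᵢ(w⁽ⁱ⁻¹⁾_{2j−1}, w⁽ⁱ⁻¹⁾_{2j}) with output w⁽ᵏ⁾₁. Then for every 1 ≤ j ≤ (n−m)/d + 1, the AllSketch output v⁽ᵏ⁾ⱼ equals the SingleSketch output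 w⁽ᵏ⁾₁ computed on the m-subword yⱼ = (x_{1+(j−1)d}, …, x_{m+(j−1)d}); in particular the map yⱼ ↦ v⁽ᵏ⁾ⱼ is linear and identical to the SingleSketch map. -/
/-!
The two recursions agree at every level, not only at the output: level `i`, position `l + 1` of
`SingleSketch` on the subword starting after `p` blocks covers the `2 ^ i` consecutive blocks
`p + l * 2 ^ i + 1, …, p + (l + 1) * 2 ^ i` of `x`, which is what `AllSketch` merges into its
level-`i` vector at index `p + l * 2 ^ i + 1` (`slevel_shift_eq_alevel`, by induction on `i`).
Taking `l = 0` and `p = j - 1` gives the agreement of outputs. Linearity of every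
`SingleSketch` level (`slevel_linear`) is an induction using linearity of each `φ i`.
-/

/-- The levels of the `SingleSketch` recursion: `slevel d φ z 0 j` is the `j`-th consecutive
`d`-block of the input `z` (1-indexed), and
`slevel d φ z i j = φᵢ(w⁽ⁱ⁻¹⁾_{2j−1}, w⁽ⁱ⁻¹⁾_{2j})`; the output is `slevel d φ z k 1`. -/
def slevel (d : ℕ) (φ : ℕ → ((Fin d → ℝ) × (Fin d → ℝ)) →ₗ[ℝ] (Fin d → ℝ))
    (z : ℕ → ℝ) : ℕ → ℕ → Fin d → ℝ
  | 0, j => fun r => z (d * (j - 1) + (r : ℕ) + 1)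
  | i + 1, j => φ (i + 1) (slevel d φ z i (2 * j - 1), slevel d φ z i (2 * j))

/-- The levels of the `AllSketch` recursion: `alevel d φ x 0 j` is the `j`-th consecutive
`d`-block of the input `x` (1-indexed), and
`alevel d φ x i j = φᵢ(v⁽ⁱ⁻¹⁾ⱼ, v⁽ⁱ⁻¹⁾_{j+2^{i−1}})`. -/
def alevel (d : ℕ) (φ : ℕ → ((Fin d → ℝ) × (Fin d → ℝ)) →ₗ[ℝ] (Fin d → ℝ))
    (x : ℕ → ℝ) : ℕ → ℕ → Fin d → ℝ
  | 0, j => fun r => x (d * (j - 1) + (r : ℕ) + 1)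
  | i + 1, j => φ (i + 1) (alevel d φ x i j, alevel d φ x i (j + 2 ^ i))

/-- Positions are written as `l + 1` and offsets as `p` so that no truncated subtraction
survives. -/
theorem slevel_shift_eq_alevel (d : ℕ)
    (φ : ℕ → ((Fin d → ℝ) × (Fin d → ℝ)) →ₗ[ℝ] (Fin d → ℝ)) (x : ℕ → ℝ) (p i : ℕ) :
    ∀ l : ℕ, slevel d φ (fun t => x (p * d + t)) i (l + 1) =
      alevel d φ x i (p + l * 2 ^ i + 1) := by
  induction i with
  | zero =>
    intro l
    funext r
    simp only [slevel, alevel, Nat.add_sub_cancel]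
    congr 1
    ring
  | succ i ih =>
    intro l
    -- The children of position `l + 1` are `2 * l + 1` and `(2 * l + 1) + 1`.
    have h₁ : 2 * (l + 1) - 1 = 2 * l + 1 := by omega
    have h₂ : 2 * (l + 1) = (2 * l + 1) + 1 := by ring
    have h₃ : p + 2 * l * 2 ^ i + 1 = p + l * 2 ^ (i + 1) + 1 := by ring
    have h₄ : p + (2 * l + 1) * 2 ^ i + 1 = p + l * 2 ^ (i + 1) + 1 + 2 ^ i := by ring
    rw [slevel, alevel, h₁, h₂, ih, ih, h₃, h₄]

theorem slevel_linear (d : ℕ)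
    (φ : ℕ → ((Fin d → ℝ) × (Fin d → ℝ)) →ₗ[ℝ] (Fin d → ℝ)) (y z : ℕ → ℝ) (a b : ℝ) (i : ℕ) :
    ∀ j : ℕ, slevel d φ (fun t => a * y t + b * z t) i j =
      a • slevel d φ y i j + b • slevel d φ z i j := by
  induction i with
  | zero =>
    intro j
    funext r
    simp [slevel]
  | succ i ih =>
    intro j
    simp only [slevel, ih, ← map_smul, ← map_add, Prod.smul_mk, Prod.mk_add_mk]

/-- **`AllSketch` agrees with `SingleSketch` on every aligned `m`-subword.** With `m = d·2^k`,
`d ∣ n`, `n ≥ m`, for every `1 ≤ j ≤ (n−m)/d + 1` the `AllSketch` output `v⁽ᵏ⁾ⱼ` equals the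
`SingleSketch` output computed on the `m`-subword `yⱼ = (x_{1+(j−1)d}, …, x_{m+(j−1)d})`
(so `yⱼ(i) = x((j−1)d + i)`); in particular, since `SingleSketch` is a composition of linear
maps, the map `yⱼ ↦ v⁽ᵏ⁾ⱼ` is linear and identical to the `SingleSketch` map. -/
theorem allSketch_eq_singleSketch (d k n m : ℕ) (hd : 1 ≤ d) (hm : m = d * 2 ^ k)
    (hdvd : d ∣ n) (hnm : m ≤ n)
    (φ : ℕ → ((Fin d → ℝ) × (Fin d → ℝ)) →ₗ[ℝ] (Fin d → ℝ)) (x : ℕ → ℝ) :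
    (∀ j ∈ Finset.Icc 1 ((n - m) / d + 1),
      alevel d φ x k j = slevel d φ (fun i => x ((j - 1) * d + i)) k 1) ∧
    (∀ (y z : ℕ → ℝ) (a b : ℝ),
      slevel d φ (fun i => a * y i + b * z i) k 1 =
        a • slevel d φ y k 1 + b • slevel d φ z k 1) := by
  refine ⟨fun j hj => ?_, fun y z a b => slevel_linear d φ y z a b k 1⟩
  have hj₁ : 1 ≤ j := (Finset.mem_Icc.mp hj).1
  have h := slevel_shift_eq_alevel d φ x (j - 1) k 0
  rw [zero_mul, add_zero, zero_add, Nat.sub_add_cancel hj₁] at h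
  exact h.symm
end
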